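/- Let E1 and E2 be finite equation sets. If E1 is not unifiable and E1 is NSTO, then E1 ∪ E2 is WNSTO. -/

import Mathlib

/-- Finite first-order terms: variables and function applications.
A function symbol is identified by its name together with the number of
arguments it is applied to (fixed arity). -/
inductive Trm : Type where
  | var : ℕ → Trm
  | fn  : ℕ → List Trm → Trm

namespace Trm

/-- `|t|`: the number of occurrences of variables and function symbols
(including constants) in the term `t`. -/
def size : Trm → ℕ
  | .var _ => 1
  | .fn _ ts => 1 + (ts.attach.map (fun ⟨t, _⟩ => size t)).sum
decreasing_by
  have := List.sizeOf_lt_of_mem ‹_ ∈ ts›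
  simp [Trm.fn.sizeOf_spec]; omega

/-- Application of a substitution (a map from variables to terms) to a term. -/
def subst (σ : ℕ → Trm) : Trm → Trm
  | .var x => σ x
  | .fn f ts => .fn f (ts.attach.map (fun ⟨t, _⟩ => subst σ t))
decreasing_by
  have := List.sizeOf_lt_of_mem ‹_ ∈ ts›
  simp [Trm.fn.sizeOf_spec]; omega

/-- The number of occurrences of the variable `x` in a term. -/
def count (x : ℕ) : Trm → ℕ
  | .var y => if y = x then 1 else 0
  | .fn _ ts => (ts.attach.map (fun ⟨t, _⟩ => count x t)).sum
decreasing_by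
  have := List.sizeOf_lt_of_mem ‹_ ∈ ts›
  simp [Trm.fn.sizeOf_spec]; omega

/-- `Occurs x t` : the variable `x` occurs in the term `t`. -/
inductive Occurs (x : ℕ) : Trm → Prop where
  | var : Occurs x (.var x)
  | fn {f : ℕ} {ts : List Trm} {t : Trm} : t ∈ ts → Occurs x t → Occurs x (.fn f ts)

end Trm

/-- The set of variables occurring in a term. -/
def varSet (t : Trm) : Set ℕ := {x | Trm.Occurs x t}

/-- The set of variables occurring in a list (tuple) of terms. -/
def varsL (l : List Trm) : Set ℕ := {x | ∃ t ∈ l, Trm.Occurs x t}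

/-- The number of occurrences of a variable in a list (tuple) of terms. -/
def countL (x : ℕ) (l : List Trm) : ℕ := (l.map (Trm.count x)).sum

/-- A term is ground if no variable occurs in it. -/
def Ground (t : Trm) : Prop := ∀ x, ¬ Trm.Occurs x t

/-- An equation set: a set of equations `s ≐ t` between terms,
represented as pairs of terms. -/
abbrev EqSet := Set (Trm × Trm)

/-- `σ` is a solution (unifier) of the equation set `E`. -/
def Solves (σ : ℕ → Trm) (E : EqSet) : Prop :=
  ∀ e ∈ E, Trm.subst σ e.1 = Trm.subst σ e.2

/-- `E` is unifiable: it has a unifier. -/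
def Unifiable (E : EqSet) : Prop := ∃ σ, Solves σ E

/-- `θ` is a most general unifier of `E`. -/
def IsMgu (θ : ℕ → Trm) (E : EqSet) : Prop :=
  Solves θ E ∧ ∀ σ, Solves σ E → ∃ ρ, ∀ x, σ x = Trm.subst ρ (θ x)

/-- The equation set `s ≐̈ t` pairing corresponding members of two
equal-length tuples of terms. -/
def zipEqs (s t : List Trm) : EqSet := {e | e ∈ s.zip t}

/-- The substitution `{X/t}` mapping `X` to `t` and every other variable
to itself. -/
def single (X : ℕ) (t : Trm) : ℕ → Trm :=
  fun y => if y = X then t else .var y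

/-- The equation set `Eθ`: the substitution applied to both sides of
every equation of `E`. -/
def substE (θ : ℕ → Trm) (E : EqSet) : EqSet :=
  (fun e => (Trm.subst θ e.1, Trm.subst θ e.2)) '' E

/-- One step of the Martelli–Montanari algorithm MMA: actions (1), (3), (4),
(5).  (Actions (2) and (6) halt with failure and produce no next equation
set; their applicability is captured by `ClashApp` and `OccApp` below.)
Two function applications carry the same function symbol iff they have the
same name and the same number of arguments (fixed arity). -/
inductive MMAStep : EqSet → EqSet → Prop where
  /-- Action (1): replace `f(s1,…,sn) ≐ f(t1,…,tn)` by `s1 ≐ t1, …, sn ≐ tn`. -/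
  | decomp {E : EqSet} {f : ℕ} {sl tl : List Trm} :
      (Trm.fn f sl, Trm.fn f tl) ∈ E → sl.length = tl.length →
      MMAStep E ((E \ {(Trm.fn f sl, Trm.fn f tl)}) ∪ {e | e ∈ sl.zip tl})
  /-- Action (3): delete an equation `X ≐ X`. -/
  | delete {E : EqSet} {x : ℕ} :
      (Trm.var x, Trm.var x) ∈ E →
      MMAStep E (E \ {(Trm.var x, Trm.var x)})
  /-- Action (4): replace `t ≐ X` (`t` not a variable) by `X ≐ t`. -/
  | flip {E : EqSet} {t : Trm} {x : ℕ} :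
      (t, Trm.var x) ∈ E → (∀ y, t ≠ Trm.var y) →
      MMAStep E ((E \ {(t, Trm.var x)}) ∪ {(Trm.var x, t)})
  /-- Action (5): on `X ≐ t` with `X ∉ Var(t)` and `X` occurring elsewhere,
  apply `{X/t}` to all other equations. -/
  | elim {E : EqSet} {x : ℕ} {t : Trm} :
      (Trm.var x, t) ∈ E → ¬ Trm.Occurs x t →
      (∃ e ∈ E \ {(Trm.var x, t)}, Trm.Occurs x e.1 ∨ Trm.Occurs x e.2) →
      MMAStep E ({(Trm.var x, t)} ∪ substE (single x t) (E \ {(Trm.var x, t)}))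

/-- Action (2) is applicable to `E`: `E` contains an equation
`f(s1,…,sn) ≐ g(t1,…,tm)` where the two function symbols differ. -/
def ClashApp (E : EqSet) : Prop :=
  ∃ f sl g tl, (Trm.fn f sl, Trm.fn g tl) ∈ E ∧
    (f ≠ g ∨ sl.length ≠ tl.length)

/-- Action (6) (the occur-check) is applicable to `E`: `E` contains an
equation `X ≐ t` with `X ∈ Var(t)` and `X ≠ t`. -/
def OccApp (E : EqSet) : Prop :=
  ∃ x t, (Trm.var x, t) ∈ E ∧ Trm.Occurs x t ∧ t ≠ Trm.var x

/-- One step of the algorithm MMA⁻ (MMA without the occur-check):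
actions (1), (3), (4), (5a), (5b). -/
inductive MMAmStep : EqSet → EqSet → Prop where
  /-- Action (1). -/
  | decomp {E : EqSet} {f : ℕ} {sl tl : List Trm} :
      (Trm.fn f sl, Trm.fn f tl) ∈ E → sl.length = tl.length →
      MMAmStep E ((E \ {(Trm.fn f sl, Trm.fn f tl)}) ∪ {e | e ∈ sl.zip tl})
  /-- Action (3). -/
  | delete {E : EqSet} {x : ℕ} :
      (Trm.var x, Trm.var x) ∈ E →
      MMAmStep E (E \ {(Trm.var x, Trm.var x)})
  /-- Action (4). -/
  | flip {E : EqSet} {t : Trm} {x : ℕ} :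
      (t, Trm.var x) ∈ E → (∀ y, t ≠ Trm.var y) →
      MMAmStep E ((E \ {(t, Trm.var x)}) ∪ {(Trm.var x, t)})
  /-- Action (5a): on `X ≐ Y` with `X, Y` distinct variables and `X`
  occurring elsewhere, apply `{X/Y}` to all other equations. -/
  | elimVar {E : EqSet} {x y : ℕ} :
      (Trm.var x, Trm.var y) ∈ E → x ≠ y →
      (∃ e ∈ E \ {(Trm.var x, Trm.var y)}, Trm.Occurs x e.1 ∨ Trm.Occurs x e.2) →
      MMAmStep E
        ({(Trm.var x, Trm.var y)} ∪
          substE (single x (Trm.var y)) (E \ {(Trm.var x, Trm.var y)}))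
  /-- Action (5b): on `X ≐ t`, `X ≐ u` with `t, u` distinct non-variable
  terms and `|t| ≤ |u|`, replace `X ≐ u` by `t ≐ u`. -/
  | merge {E : EqSet} {x : ℕ} {t u : Trm} :
      (Trm.var x, t) ∈ E → (Trm.var x, u) ∈ E → t ≠ u →
      (∀ y, t ≠ Trm.var y) → (∀ y, u ≠ Trm.var y) → t.size ≤ u.size →
      MMAmStep E ((E \ {(Trm.var x, u)}) ∪ {(t, u)})

/-- `F` is reachable from `E` by (non-failing) actions of MMA. -/
def Reachable (E F : EqSet) : Prop := Relation.ReflTransGen MMAStep E F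

/-- `E` is NSTO: no run of MMA on `E` performs action (6), i.e. the
occur-check action is never applicable along any run. -/
def NSTO (E : EqSet) : Prop := ∀ F, Reachable E F → ¬ OccApp F

/-- `E` is WNSTO: there exists an occur-check free run of MMA on `E`, i.e. a
maximal run that either halts with failure by action (2), or ends with an
equation set to which no action (including (2) and (6)) applies — without
ever performing action (6). -/
def WNSTO (E : EqSet) : Prop :=
  ∃ F, Reachable E F ∧
    (ClashApp F ∨ (¬ ClashApp F ∧ ¬ OccApp F ∧ ∀ F', ¬ MMAStep F F'))

theorem Trm.ind' {P : Trm → Prop} (hv : ∀ x, P (.var x))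
    (hf : ∀ f ts, (∀ t ∈ ts, P t) → P (.fn f ts)) : ∀ t, P t
  | .var x => hv x
  | .fn f ts => hf f ts (fun t _ => Trm.ind' hv hf t)
decreasing_by
  have := List.sizeOf_lt_of_mem ‹_ ∈ ts›
  simp [Trm.fn.sizeOf_spec]; omega

def Trm.wt : Trm → ℕ
  | .var _ => 1
  | .fn _ ts => 2 + (ts.attach.map (fun ⟨t, _⟩ => Trm.wt t)).sum
decreasing_by
  have := List.sizeOf_lt_of_mem ‹_ ∈ ts›
  simp [Trm.fn.sizeOf_spec]; omega

theorem wt_var (x : ℕ) : Trm.wt (.var x) = 1 := by simp [Trm.wt]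
theorem wt_fn (f : ℕ) (ts : List Trm) : Trm.wt (.fn f ts) = 2 + (ts.map Trm.wt).sum := by
  simp [Trm.wt]
theorem subst_var' (σ : ℕ → Trm) (x : ℕ) : Trm.subst σ (.var x) = σ x := by simp [Trm.subst]
theorem subst_fn' (σ : ℕ → Trm) (f : ℕ) (ts : List Trm) :
    Trm.subst σ (.fn f ts) = .fn f (ts.map (Trm.subst σ)) := by
  simp [Trm.subst]

theorem occurs_var_iff (x y : ℕ) : Trm.Occurs x (.var y) ↔ x = y := by
  constructor
  · intro h; cases h; rfl
  · rintro rfl; exact .var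
theorem occurs_fn_iff (x f : ℕ) (ts : List Trm) :
    Trm.Occurs x (.fn f ts) ↔ ∃ t ∈ ts, Trm.Occurs x t := by
  constructor
  · intro h; cases h with | fn h1 h2 => exact ⟨_, h1, h2⟩
  · rintro ⟨t, h1, h2⟩; exact .fn h1 h2

theorem subst_congr' (σ τ : ℕ → Trm) (t : Trm) :
    (∀ x, Trm.Occurs x t → σ x = τ x) → Trm.subst σ t = Trm.subst τ t := by
  induction t using Trm.ind' with
  | hv x => intro h; simpa [subst_var'] using h x .var
  | hf f ts ih =>
    intro h
    rw [subst_fn', subst_fn']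
    congr 1
    exact List.map_congr_left (fun t ht => ih t ht (fun x hx => h x (.fn ht hx)))

theorem subst_id' (t : Trm) : Trm.subst Trm.var t = t := by
  induction t using Trm.ind' with
  | hv x => rw [subst_var']
  | hf f ts ih =>
    rw [subst_fn']
    congr 1
    conv_rhs => rw [← List.map_id ts]
    exact List.map_congr_left (fun t ht => ih t ht)

theorem subst_subst' (σ τ : ℕ → Trm) (t : Trm) :
    Trm.subst σ (Trm.subst τ t) = Trm.subst (fun x => Trm.subst σ (τ x)) t := by
  induction t using Trm.ind' with
  | hv x => rw [subst_var', subst_var']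
  | hf f ts ih =>
    rw [subst_fn', subst_fn', subst_fn', List.map_map]
    congr 1
    exact List.map_congr_left (fun t ht => ih t ht)

theorem occurs_subst (y : ℕ) (θ : ℕ → Trm) (t : Trm) :
    Trm.Occurs y (Trm.subst θ t) → ∃ z, Trm.Occurs z t ∧ Trm.Occurs y (θ z) := by
  induction t using Trm.ind' with
  | hv x => intro h; rw [subst_var'] at h; exact ⟨x, .var, h⟩
  | hf f ts ih =>
    intro h
    rw [subst_fn', occurs_fn_iff] at h
    obtain ⟨s, hs, ho⟩ := h
    obtain ⟨t, ht, rfl⟩ := List.mem_map.1 hs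
    obtain ⟨z, hz, hz'⟩ := ih t ht ho
    exact ⟨z, .fn ht hz, hz'⟩

theorem occurs_single (y x : ℕ) (t s : Trm) (h : Trm.Occurs y (Trm.subst (single x t) s)) :
    Trm.Occurs y t ∧ Trm.Occurs x s ∨ (y ≠ x ∧ Trm.Occurs y s) := by
  obtain ⟨z, hz, hz'⟩ := occurs_subst _ _ _ h
  unfold single at hz'
  split_ifs at hz' with hzx
  · subst hzx; exact .inl ⟨hz', hz⟩
  · rw [occurs_var_iff] at hz'; subst hz'; exact .inr ⟨hzx, hz⟩

theorem occurs_finite (t : Trm) : {x | Trm.Occurs x t}.Finite := by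
  induction t using Trm.ind' with
  | hv x => simp [occurs_var_iff]
  | hf f ts ih =>
    have : {x | Trm.Occurs x (.fn f ts)} = ⋃ t ∈ {t | t ∈ ts}, {x | Trm.Occurs x t} := by
      ext x; simp [occurs_fn_iff]
    rw [this]
    exact Set.Finite.biUnion (List.finite_toSet ts) ih

def occE (x : ℕ) (e : Trm × Trm) : Prop := Trm.Occurs x e.1 ∨ Trm.Occurs x e.2

def Solvd (E : EqSet) (x : ℕ) : Prop :=
  ∃ t, (Trm.var x, t) ∈ E ∧ ¬ Trm.Occurs x t ∧ ∀ e ∈ E, e ≠ (Trm.var x, t) → ¬ occE x e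

def vrs (E : EqSet) : Set ℕ := {x | ∃ e ∈ E, occE x e}
def unsolv (E : EqSet) : Set ℕ := {x | x ∈ vrs E ∧ ¬ Solvd E x}

theorem vrs_finite (E : EqSet) (h : E.Finite) : (vrs E).Finite := by
  have : vrs E = ⋃ e ∈ E, ({x | Trm.Occurs x e.1} ∪ {x | Trm.Occurs x e.2}) := by
    ext x; simp [vrs, occE]
  rw [this]
  exact Set.Finite.biUnion h (fun e _ => (occurs_finite _).union (occurs_finite _))

theorem unsolv_finite (E : EqSet) (h : E.Finite) : (unsolv E).Finite :=
  (vrs_finite E h).subset (fun _ hx => hx.1)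

def ew (e : Trm × Trm) : ℕ := 2 * e.1.wt + e.2.wt

open Classical in
noncomputable def W (E : EqSet) : ℕ := if h : E.Finite then ∑ e ∈ h.toFinset, ew e else 0

theorem wt_pos (t : Trm) : 0 < t.wt := by
  cases t with
  | var x => simp [wt_var]
  | fn f ts => rw [wt_fn]; omega

open Classical in
theorem sum_toFinset_le (l : List (Trm × Trm)) : ∑ e ∈ l.toFinset, ew e ≤ (l.map ew).sum := by
  induction l with
  | nil => simp
  | cons a l ih =>
    rw [List.toFinset_cons]
    by_cases h : a ∈ l.toFinset
    · rw [Finset.insert_eq_of_mem h]; simp; omega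
    · rw [Finset.sum_insert h]; simp; omega

theorem W_dec (E : EqSet) (hE : E.Finite) (e : Trm × Trm) (he : e ∈ E) (l : List (Trm × Trm))
    (hl : (l.map ew).sum < ew e) : W ((E \ {e}) ∪ {a | a ∈ l}) < W E := by
  classical
  have hf : ((E \ {e}) ∪ {a | a ∈ l}).Finite := (hE.subset Set.sdiff_subset).union l.finite_toSet
  unfold W
  rw [dif_pos hE, dif_pos hf]
  have h1 : hf.toFinset = hE.toFinset.erase e ∪ l.toFinset := by
    ext a; simp; tauto
  rw [h1]
  have h2 := Finset.sum_union_inter (s₁ := hE.toFinset.erase e) (s₂ := l.toFinset) (f := ew)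
  have h3 := Finset.add_sum_erase hE.toFinset ew (hE.mem_toFinset.2 he)
  have h4 := sum_toFinset_le l
  omega

theorem zip_sum (sl tl : List Trm) :
    ((sl.zip tl).map ew).sum ≤ 2 * (sl.map Trm.wt).sum + (tl.map Trm.wt).sum := by
  induction sl generalizing tl with
  | nil => simp
  | cons a l ih =>
    cases tl with
    | nil => simp
    | cons b m =>
      have := ih m
      simp [ew] at this ⊢
      omega

/-- replacing a non-"variable on the left" equation keeps solved variables solved. -/
theorem unsolv_mono (E : EqSet) (e : Trm × Trm) (he : e ∈ E) (Z : EqSet)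
    (hn : ∀ x t, e = (Trm.var x, t) → Trm.Occurs x t)
    (hZ : ∀ a ∈ Z, ∀ x, occE x a → occE x e) :
    unsolv ((E \ {e}) ∪ Z) ⊆ unsolv E := by
  rintro x ⟨⟨a, ha, hxa⟩, hns⟩
  refine ⟨?_, ?_⟩
  · rcases ha with ha | ha
    · exact ⟨a, ha.1, hxa⟩
    · exact ⟨e, he, hZ a ha x hxa⟩
  · rintro ⟨t, ht, hnt, hall⟩
    have hne : e ≠ (Trm.var x, t) := fun h => hnt (hn x t h)
    refine hns ⟨t, .inl ⟨ht, fun h => hne h.symm⟩, hnt, ?_⟩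
    intro b hb hbne hob
    rcases hb with hb | hb
    · exact hall b hb.1 hbne hob
    · exact hall e he hne (hZ b hb x hob)

theorem unsolv_elim (E : EqSet) (x : ℕ) (t : Trm) (h : (Trm.var x, t) ∈ E)
    (hno : ¬ Trm.Occurs x t)
    (hex : ∃ e ∈ E \ {(Trm.var x, t)}, Trm.Occurs x e.1 ∨ Trm.Occurs x e.2) :
    unsolv ({(Trm.var x, t)} ∪ substE (single x t) (E \ {(Trm.var x, t)})) ⊂ unsolv E := by
  have hxE : x ∈ unsolv E := by
    refine ⟨⟨_, h, .inl .var⟩, ?_⟩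
    rintro ⟨u, hu, hnu, hall⟩
    obtain ⟨e, ⟨heE, hene⟩, heo⟩ := hex
    by_cases htu : t = u
    · subst htu; exact hall e heE hene heo
    · exact hall _ h (by simpa using htu) (.inl .var)
  have hxs : Solvd ({(Trm.var x, t)} ∪ substE (single x t) (E \ {(Trm.var x, t)})) x := by
    refine ⟨t, .inl rfl, hno, ?_⟩
    rintro e (rfl | ⟨a, ha, rfl⟩) hne ho
    · exact hne rfl
    · rcases ho with ho | ho <;> rcases occurs_single _ _ _ _ ho with h' | h'
      · exact hno h'.1
      · exact h'.1 rfl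
      · exact hno h'.1
      · exact h'.1 rfl
  have key : ∀ y (a : Trm × Trm),
      occE y (Trm.subst (single x t) a.1, Trm.subst (single x t) a.2) →
      occE y (Trm.var x, t) ∨ occE y a := by
    intro y a ho
    rcases ho with ho | ho <;> rcases occurs_single _ _ _ _ ho with h' | h'
    · exact .inl (.inr h'.1)
    · exact .inr (.inl h'.2)
    · exact .inl (.inr h'.1)
    · exact .inr (.inr h'.2)
  rw [Set.ssubset_iff_of_subset]
  · exact ⟨x, hxE, fun hc => hc.2 hxs⟩
  rintro y ⟨⟨a, ha, hya⟩, hns⟩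
  refine ⟨?_, ?_⟩
  · rcases ha with rfl | ⟨b, hb, rfl⟩
    · exact ⟨_, h, hya⟩
    · rcases key y b hya with h' | h'
      · exact ⟨_, h, h'⟩
      · exact ⟨b, hb.1, h'⟩
  · rintro ⟨u, hu, hnu, hall⟩
    by_cases hyx : y = x
    · subst hyx; exact hns hxs
    have hne : (Trm.var x, t) ≠ (Trm.var y, u) := by
      intro hc; simp at hc; exact hyx hc.1.symm
    have hyt := hall _ h hne
    refine hns ⟨Trm.subst (single x t) u, .inr ⟨(Trm.var y, u), ⟨hu, fun hc => hne hc.symm⟩, ?_⟩,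
      ?_, ?_⟩
    · simp [subst_var', single, hyx]
    · intro ho
      rcases occurs_single _ _ _ _ ho with h' | h'
      · exact hyt (.inr h'.1)
      · exact hnu h'.2
    · rintro e (rfl | ⟨a, ha, rfl⟩) hne' ho
      · exact hyt ho
      · rcases key y a ho with h' | h'
        · exact hyt h'
        · refine hall a ha.1 ?_ h'
          rintro rfl
          apply hne'
          simp [subst_var', single, hyx]

theorem step_dec (E E' : EqSet) (hE : E.Finite) (hs : MMAStep E E') :
    E'.Finite ∧ ((unsolv E').ncard < (unsolv E).ncard ∨
      ((unsolv E').ncard ≤ (unsolv E).ncard ∧ W E' < W E)) := by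
  cases hs with
  | @decomp f sl tl h hl =>
    refine ⟨(hE.subset Set.sdiff_subset).union (List.finite_toSet _), .inr ⟨?_, ?_⟩⟩
    · refine Set.ncard_le_ncard (unsolv_mono E _ h _ ?_ ?_) (unsolv_finite E hE)
      · intro x t hc; simp at hc
      · rintro ⟨a, b⟩ hab x ho
        have := List.of_mem_zip hab
        rcases ho with ho | ho
        · exact .inl (.fn this.1 ho)
        · exact .inr (.fn this.2 ho)
    · apply W_dec E hE _ h
      have := zip_sum sl tl
      simp only [ew, wt_fn] at this ⊢
      omega
  | @delete x h =>
    have hEq : E \ {(Trm.var x, Trm.var x)} =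
        (E \ {(Trm.var x, Trm.var x)}) ∪ {a | a ∈ ([] : List (Trm × Trm))} := by simp
    refine ⟨hE.subset Set.sdiff_subset, .inr ⟨?_, ?_⟩⟩
    · rw [hEq]
      refine Set.ncard_le_ncard (unsolv_mono E _ h _ ?_ ?_) (unsolv_finite E hE)
      · intro y t hc
        simp at hc
        obtain ⟨rfl, rfl⟩ := hc
        exact .var
      · intro a ha; simp at ha
    · rw [hEq]
      apply W_dec E hE _ h
      simp [ew, wt_var]
  | @flip t x h hnv =>
    refine ⟨(hE.subset Set.sdiff_subset).union (Set.finite_singleton _), .inr ⟨?_, ?_⟩⟩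
    · refine Set.ncard_le_ncard (unsolv_mono E _ h _ ?_ ?_) (unsolv_finite E hE)
      · intro y u hc
        simp at hc
        exact absurd hc.1 (hnv y)
      · rintro a ha y ho
        rw [Set.mem_singleton_iff] at ha
        subst ha
        exact ho.symm
    · have := W_dec E hE _ h [(Trm.var x, t)] (by
        cases t with
        | var y => exact absurd rfl (hnv y)
        | fn f ts => simp only [List.map_cons, List.map_nil, List.sum_cons, List.sum_nil, ew, wt_var, wt_fn]; omega)
      simpa using this
  | @elim x t h hno hex =>
    refine ⟨(Set.finite_singleton _).union ((hE.subset Set.sdiff_subset).image _), .inl ?_⟩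
    exact Set.ncard_lt_ncard (unsolv_elim E x t h hno hex) (unsolv_finite E hE)

theorem map_eq_of_zip (σ : ℕ → Trm) (sl tl : List Trm) (hl : sl.length = tl.length)
    (h : ∀ e ∈ sl.zip tl, Trm.subst σ e.1 = Trm.subst σ e.2) :
    sl.map (Trm.subst σ) = tl.map (Trm.subst σ) := by
  induction sl generalizing tl with
  | nil => cases tl with
    | nil => rfl
    | cons b m => simp at hl
  | cons a l ih =>
    cases tl with
    | nil => simp at hl
    | cons b m =>
      have h1 := h (a, b) (by simp)
      have h2 := ih m (by simpa using hl) (fun e he => h e (by simp [he]))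
      simp only [List.map_cons, h2]
      rw [h1]

theorem step_solves (E E' : EqSet) (hs : MMAStep E E') (σ : ℕ → Trm) (h' : Solves σ E') :
    Solves σ E := by
  intro e he
  cases hs with
  | @decomp f sl tl h hl =>
    by_cases hc : e = (Trm.fn f sl, Trm.fn f tl)
    · subst hc
      simp only [subst_fn']
      rw [map_eq_of_zip σ sl tl hl (fun e he => h' e (.inr he))]
    · exact h' e (.inl ⟨he, hc⟩)
  | @delete x h =>
    by_cases hc : e = (Trm.var x, Trm.var x)
    · subst hc; rfl
    · exact h' e ⟨he, hc⟩
  | @flip t x h hnv =>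
    by_cases hc : e = (t, Trm.var x)
    · subst hc; exact (h' (Trm.var x, t) (.inr rfl)).symm
    · exact h' e (.inl ⟨he, hc⟩)
  | @elim x t h hno hex =>
    by_cases hc : e = (Trm.var x, t)
    · subst hc; exact h' _ (.inl rfl)
    · have hx := h' (Trm.var x, t) (.inl rfl)
      simp only [subst_var'] at hx
      have hcomp : (fun y => Trm.subst σ (single x t y)) = σ := by
        funext y
        unfold single
        split_ifs with hyx
        · rw [hyx, hx]
        · rw [subst_var']
      have := h' _ (.inr ⟨e, ⟨he, hc⟩, rfl⟩)
      simpa only [subst_subst', hcomp] using this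

theorem normal_unifiable (E : EqSet) (hc : ¬ ClashApp E) (ho : ¬ OccApp E)
    (hn : ∀ E', ¬ MMAStep E E') : Unifiable E := by
  classical
  have hform : ∀ e ∈ E, ∃ x t, e = (Trm.var x, t) ∧ ¬ Trm.Occurs x t ∧
      ∀ a ∈ E, a ≠ e → ¬ occE x a := by
    rintro ⟨s, t⟩ he
    cases s with
    | fn f sl =>
      cases t with
      | var x => exact absurd (MMAStep.flip he (by simp)) (hn _)
      | fn g tl =>
        by_cases hfg : f = g ∧ sl.length = tl.length
        · obtain ⟨rfl, hl⟩ := hfg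
          exact absurd (MMAStep.decomp he hl) (hn _)
        · exact absurd ⟨f, sl, g, tl, he, by tauto⟩ hc
    | var x =>
      have htx : t ≠ Trm.var x := by
        rintro rfl; exact hn _ (MMAStep.delete he)
      have hot : ¬ Trm.Occurs x t := fun h => ho ⟨x, t, he, h, htx⟩
      refine ⟨x, t, rfl, hot, ?_⟩
      intro a ha hne hoa
      exact hn _ (MMAStep.elim he hot ⟨a, ⟨ha, hne⟩, hoa⟩)
  refine ⟨fun x => if h : ∃ t, (Trm.var x, t) ∈ E then h.choose else .var x, ?_⟩
  intro e he
  obtain ⟨x, t, rfl, hot, hall⟩ := hform e he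
  have hx : ∃ t, (Trm.var x, t) ∈ E := ⟨t, he⟩
  simp only [subst_var']
  rw [dif_pos hx]
  have h1 : hx.choose = t := by
    by_contra hne
    exact hall _ hx.choose_spec (by simpa using hne) (.inl .var)
  rw [h1]
  conv_lhs => rw [← subst_id' t]
  apply subst_congr'
  intro y hy
  rw [dif_neg]
  rintro ⟨u, hu⟩
  obtain ⟨y', u', hyu, _, hall'⟩ := hform _ hu
  simp only [Prod.mk.injEq, Trm.var.injEq] at hyu
  obtain ⟨rfl, rfl⟩ := hyu
  refine hall' _ he ?_ (.inr hy)
  intro hc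
  simp only [Prod.mk.injEq, Trm.var.injEq] at hc
  obtain ⟨rfl, rfl⟩ := hc
  exact hot hy

theorem reach_clash (n m : ℕ) (E : EqSet) (hn : (unsolv E).ncard = n) (hm : W E = m)
    (hE : E.Finite) (hu : ¬ Unifiable E) (hns : NSTO E) : ∃ F, Reachable E F ∧ ClashApp F := by
  induction n using Nat.strong_induction_on generalizing m E with
  | _ n ihn =>
    induction m using Nat.strong_induction_on generalizing E with
    | _ m ihm =>
      by_cases hc : ClashApp E
      · exact ⟨E, .refl, hc⟩
      have ho := hns E .refl
      obtain ⟨E', hs⟩ : ∃ E', MMAStep E E' := by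
        by_contra hcon
        exact hu (normal_unifiable E hc ho (not_exists.1 hcon))
      obtain ⟨hf, hd⟩ := step_dec E E' hE hs
      have hu' : ¬ Unifiable E' := fun ⟨σ, hσ⟩ => hu ⟨σ, step_solves E E' hs σ hσ⟩
      have hns' : NSTO E' := fun F hF => hns F (Relation.ReflTransGen.head hs hF)
      have : ∃ F, Reachable E' F ∧ ClashApp F := by
        rcases lt_or_ge (unsolv E').ncard (unsolv E).ncard with hlt | hge
        · exact ihn _ (hn ▸ hlt) _ E' rfl rfl hf hu' hns'
        · rcases hd with hd | hd
          · omega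
          · exact ihm _ (hm ▸ hd.2) E' (by omega) rfl hf hu' hns'
      obtain ⟨F, hF, hcF⟩ := this
      exact ⟨F, Relation.ReflTransGen.head hs hF, hcF⟩

theorem step_sim (F F' G : EqSet) (hs : MMAStep F F') (hFG : F ⊆ G) :
    ∃ G', MMAStep G G' ∧ F' ⊆ G' := by
  cases hs with
  | decomp h hl =>
    exact ⟨_, .decomp (hFG h) hl, Set.union_subset_union_left _ (Set.sdiff_subset_sdiff_left hFG)⟩
  | delete h => exact ⟨_, .delete (hFG h), Set.sdiff_subset_sdiff_left hFG⟩
  | flip h hnv =>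
    exact ⟨_, .flip (hFG h) hnv, Set.union_subset_union_left _ (Set.sdiff_subset_sdiff_left hFG)⟩
  | elim h hno hex =>
    obtain ⟨e, he, heo⟩ := hex
    exact ⟨_, .elim (hFG h) hno ⟨e, ⟨hFG he.1, he.2⟩, heo⟩,
      Set.union_subset_union_right _ (Set.image_mono (Set.sdiff_subset_sdiff_left hFG))⟩

theorem reach_sim (E F G : EqSet) (hr : Reachable E F) (hEG : E ⊆ G) :
    ∃ G', Reachable G G' ∧ F ⊆ G' := by
  induction hr with
  | refl => exact ⟨G, .refl, hEG⟩
  | tail _ hs ih =>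
    obtain ⟨G', hG', hsub⟩ := ih
    obtain ⟨G'', hst, hsub'⟩ := step_sim _ _ G' hs hsub
    exact ⟨G'', hG'.tail hst, hsub'⟩

/-- Let `E1` and `E2` be finite equation sets.  If `E1` is not unifiable and
`E1` is NSTO, then `E1 ∪ E2` is WNSTO. -/
theorem stmt9 (E1 E2 : EqSet) (h1 : E1.Finite) (h2 : E2.Finite)
    (hnu : ¬ Unifiable E1) (hnsto : NSTO E1) :
    WNSTO (E1 ∪ E2) := by
  obtain ⟨F, hF, hc⟩ := reach_clash _ _ E1 rfl rfl h1 hnu hnsto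
  obtain ⟨G, hG, hsub⟩ := reach_sim E1 F (E1 ∪ E2) hF Set.subset_union_left
  obtain ⟨f, sl, g, tl, hmem, hne⟩ := hc
  exact ⟨G, hG, .inl ⟨f, sl, g, tl, hsub hmem, hne⟩⟩
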